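/- arXiv:2106.07108 — 2 statements merged into one kernel-verified Lean document; each statement's English description precedes it below -/
import Mathlib

section
/- Suppose QᵀQ is positive definite and e ∈ ℝ^m is a unit vector with eᵀ F e < 0, where F = QᵀQ − wᵀw. Then w e ≠ 0, and there exists α₀ > 0 such that for every α ≥ α₀ the control input u = α · sgn(w e) · e satisfies the second-order cone constraint ‖Q u + r‖₂ ≤ w u + v. (Constructive content of the proof of Lemma 3 of the paper.) -/
open Matrix

/-- The Euclidean norm of a vector in `ℝ^{m+1}`. -/
noncomputable def eucNorm {n : ℕ} (x : Fin n → ℝ) : ℝ :=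
  Real.sqrt (x ⬝ᵥ x)

/-- A real quadratic with positive leading coefficient is nonnegative from an explicit point on. -/
theorem quadratic_nonneg_of_le {d : ℝ} (hd : 0 < d) (b k : ℝ) {x : ℝ}
    (hx : 1 + (|b| + |k|) / d ≤ x) : 0 ≤ d * x ^ 2 + b * x + k := by
  have hq : 0 ≤ (|b| + |k|) / d := by positivity
  have hx1 : 1 ≤ x := by linarith
  have hdx : |b| + |k| ≤ d * x := by
    have h : (|b| + |k|) / d ≤ x := by linarith
    rwa [div_le_iff₀' hd] at h
  have hmul := mul_le_mul_of_nonneg_right hdx (by linarith : 0 ≤ x)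
  have hb := mul_le_mul_of_nonneg_right (neg_abs_le b) (by linarith : 0 ≤ x)
  have hk := mul_le_mul_of_nonneg_left hx1 (abs_nonneg k)
  have hk' := neg_abs_le k
  nlinarith

/-- The quadratic form of `QᵀQ - wᵀw`. -/
theorem dotProduct_gram_sub_vecMulVec_mulVec {m n : Type*} [Fintype m] [Fintype n]
    (Q : Matrix n m ℝ) (w e : m → ℝ) :
    e ⬝ᵥ ((Qᵀ * Q - Matrix.vecMulVec w w) *ᵥ e) =
      (Q *ᵥ e) ⬝ᵥ (Q *ᵥ e) - (w ⬝ᵥ e) ^ 2 := by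
  have hQ : e ⬝ᵥ (Qᵀ *ᵥ (Q *ᵥ e)) = (Q *ᵥ e) ⬝ᵥ (Q *ᵥ e) := by
    rw [Matrix.dotProduct_mulVec, Matrix.vecMul_transpose]
  have hw : e ⬝ᵥ (Matrix.vecMulVec w w *ᵥ e) = (w ⬝ᵥ e) ^ 2 := by
    rw [Matrix.vecMulVec_mulVec, op_smul_eq_smul, dotProduct_smul, dotProduct_comm e w,
      smul_eq_mul, sq]
  rw [Matrix.sub_mulVec, dotProduct_sub, ← Matrix.mulVec_mulVec, hQ, hw]

/-- Constructive content of the proof of Lemma 3: if `QᵀQ` is positive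
definite and `e` is a unit vector with `eᵀ F e < 0`, where `F = QᵀQ − wᵀw`,
then `w e ≠ 0` and for every sufficiently large `α > 0` the control input
`u = α · sgn(w e) · e` satisfies the SOC constraint `‖Q u + r‖₂ ≤ w u + v`. -/
theorem sufficient_condition_constructive {m : ℕ} (hm : 0 < m)
    (Q : Matrix (Fin (m + 1)) (Fin m) ℝ) (r : Fin (m + 1) → ℝ)
    (w : Fin m → ℝ) (v : ℝ)
    (hQ : (Qᵀ * Q).PosDef)
    (e : Fin m → ℝ) (he : e ⬝ᵥ e = 1)
    (hneg : e ⬝ᵥ ((Qᵀ * Q - Matrix.vecMulVec w w) *ᵥ e) < 0) :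
    w ⬝ᵥ e ≠ 0 ∧
    ∃ α₀ : ℝ, 0 < α₀ ∧ ∀ α : ℝ, α₀ ≤ α →
      eucNorm (Q *ᵥ ((α * Real.sign (w ⬝ᵥ e)) • e) + r) ≤
        w ⬝ᵥ ((α * Real.sign (w ⬝ᵥ e)) • e) + v := by
  rw [dotProduct_gram_sub_vecMulVec_mulVec] at hneg
  have hgram : 0 ≤ (Q *ᵥ e) ⬝ᵥ (Q *ᵥ e) :=
    Finset.sum_nonneg fun i _ => mul_self_nonneg ((Q *ᵥ e) i)
  have hc : w ⬝ᵥ e ≠ 0 := by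
    intro h
    rw [h] at hneg
    linarith
  refine ⟨hc, ?_⟩
  set p := Q *ᵥ e with hp
  set c := w ⬝ᵥ e
  set s := Real.sign c
  have hsc : s * c = |c| := by
    rcases hc.lt_or_gt with h | h
    · simp [s, Real.sign_of_neg h, abs_of_neg h]
    · simp [s, Real.sign_of_pos h, abs_of_pos h]
  have hss : s ^ 2 = 1 := by
    rcases Real.sign_apply_eq_of_ne_zero c hc with h | h <;> simp [s, h]
  have hd : 0 < c ^ 2 - p ⬝ᵥ p := by linarith
  have hcpos : 0 < |c| := abs_pos.mpr hc
  set b := 2 * (|c| * v - s * (p ⬝ᵥ r))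
  set k := v ^ 2 - r ⬝ᵥ r
  refine ⟨1 + (|b| + |k|) / (c ^ 2 - p ⬝ᵥ p) + |v| / |c|, by positivity, fun α hα => ?_⟩
  have hv : 0 ≤ |v| / |c| := by positivity
  have hquot : 0 ≤ (|b| + |k|) / (c ^ 2 - p ⬝ᵥ p) := by positivity
  have hquad := quadratic_nonneg_of_le hd b k (x := α) (by linarith)
  have hlin : |v| ≤ |c| * α := (div_le_iff₀' hcpos).mp (by linarith)
  have hright : w ⬝ᵥ ((α * s) • e) + v = α * |c| + v := by
    rw [dotProduct_smul, smul_eq_mul, mul_assoc, hsc]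
  have hleft : (Q *ᵥ ((α * s) • e) + r) ⬝ᵥ (Q *ᵥ ((α * s) • e) + r) =
      α ^ 2 * (p ⬝ᵥ p) + 2 * α * s * (p ⬝ᵥ r) + r ⬝ᵥ r := by
    rw [Matrix.mulVec_smul, ← hp]
    simp only [add_dotProduct, dotProduct_add, smul_dotProduct, dotProduct_smul, smul_eq_mul,
      dotProduct_comm r p]
    linear_combination α ^ 2 * (p ⬝ᵥ p) * hss
  rw [eucNorm, hright, hleft]
  refine Real.sqrt_le_iff.mpr ⟨by linarith [neg_abs_le v], ?_⟩
  simp only [b, k] at hquad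
  linear_combination hquad - α ^ 2 * sq_abs c
end

section
/- Suppose F = QᵀQ − wᵀw is positive definite, H is not positive definite, and w u₁ + v ≥ 0, where u₁ := −F⁻¹(Qᵀr − wᵀv). Then u₁ itself satisfies the second-order cone constraint: ‖Q u₁ + r‖₂ ≤ w u₁ + v. (Sufficiency direction of Case 2 of Theorem 2 of the paper, with explicit feasible point.) -/
open Matrix

/-- The symmetric matrix
`H = [[rᵀr − v², rᵀQ − v w], [Qᵀr − wᵀv, QᵀQ − wᵀw]]`. -/
noncomputable def socMatH {m : ℕ} (Q : Matrix (Fin (m + 1)) (Fin m) ℝ)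
    (r : Fin (m + 1) → ℝ) (w : Fin m → ℝ) (v : ℝ) :
    Matrix (Fin 1 ⊕ Fin m) (Fin 1 ⊕ Fin m) ℝ :=
  Matrix.fromBlocks
    (Matrix.of fun _ _ => r ⬝ᵥ r - v ^ 2)
    (Matrix.of fun _ j => (Qᵀ *ᵥ r) j - v * w j)
    (Matrix.of fun i _ => (Qᵀ *ᵥ r) i - v * w i)
    (Qᵀ * Q - Matrix.vecMulVec w w)

/-- The quadratic form of `QᵀQ − wᵀw`, polarized. -/
lemma dotProduct_gram_sub_vecMulVec_mulVec_s7 {k n : ℕ} (Q : Matrix (Fin k) (Fin n) ℝ)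
    (w x y : Fin n → ℝ) :
    x ⬝ᵥ ((Qᵀ * Q - vecMulVec w w) *ᵥ y) =
      (Q *ᵥ x) ⬝ᵥ (Q *ᵥ y) - (w ⬝ᵥ x) * (w ⬝ᵥ y) := by
  rw [sub_mulVec, dotProduct_sub, ← mulVec_mulVec, dotProduct_mulVec, vecMul_transpose,
    vecMulVec_mulVec, op_smul_eq_smul, dotProduct_smul, dotProduct_comm x w, smul_eq_mul,
    mul_comm (w ⬝ᵥ y)]

/-- The quadratic form of `H` is that of the homogenized cone constraint. -/
lemma dotProduct_socMatH_mulVec {m : ℕ} (Q : Matrix (Fin (m + 1)) (Fin m) ℝ)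
    (r : Fin (m + 1) → ℝ) (w : Fin m → ℝ) (v a : ℝ) (y : Fin m → ℝ) :
    Sum.elim (fun _ : Fin 1 => a) y ⬝ᵥ (socMatH Q r w v *ᵥ Sum.elim (fun _ => a) y) =
      (Q *ᵥ y + a • r) ⬝ᵥ (Q *ᵥ y + a • r) - (w ⬝ᵥ y + a * v) ^ 2 := by
  have hrow : (of fun (_ : Fin 1) j => (Qᵀ *ᵥ r) j - v * w j) *ᵥ y =
      fun _ => (Q *ᵥ y) ⬝ᵥ r - v * (w ⬝ᵥ y) := by
    ext i
    change (Qᵀ *ᵥ r - v • w) ⬝ᵥ y = _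
    rw [sub_dotProduct, smul_dotProduct, dotProduct_comm, dotProduct_mulVec, vecMul_transpose,
      smul_eq_mul]
  have hcol : (of fun i (_ : Fin 1) => (Qᵀ *ᵥ r) i - v * w i) *ᵥ (fun _ => a) =
      a • (Qᵀ *ᵥ r - v • w) := by
    ext i
    simp [mulVec, dotProduct, mul_comm]
  have hcorner : (of fun (_ _ : Fin 1) => r ⬝ᵥ r - v ^ 2) *ᵥ (fun _ => a) =
      fun _ => a * (r ⬝ᵥ r - v ^ 2) := by
    ext i
    rw [mulVec, dotProduct, Fin.sum_univ_one, of_apply, mul_comm]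
  have hone (c : ℝ) : (fun _ : Fin 1 => a) ⬝ᵥ (fun _ => c) = a * c := Fin.sum_univ_one _
  rw [socMatH, fromBlocks_mulVec, Sum.elim_comp_inl, Sum.elim_comp_inr, hrow, hcol, hcorner,
    sumElim_dotProduct_sumElim, dotProduct_add, hone, hone, dotProduct_add y,
    dotProduct_gram_sub_vecMulVec_mulVec_s7, dotProduct_smul, dotProduct_sub, dotProduct_mulVec y,
    vecMul_transpose]
  simp only [dotProduct_add, add_dotProduct, dotProduct_smul, smul_dotProduct, smul_eq_mul,
    dotProduct_comm r (Q *ᵥ y), dotProduct_comm y w]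
  ring

lemma socMatH_isHermitian {m : ℕ} (Q : Matrix (Fin (m + 1)) (Fin m) ℝ)
    (r : Fin (m + 1) → ℝ) (w : Fin m → ℝ) (v : ℝ)
    (hF : (Qᵀ * Q - vecMulVec w w).IsHermitian) : (socMatH Q r w v).IsHermitian :=
  IsHermitian.fromBlocks (by ext; rfl) (by ext; rfl) hF

/-- If `F` is positive definite, `u` is the critical point of the quadratic
`‖Q u + r‖² − (w u + v)²`, and its value there is positive, then `H` is positive definite. -/
lemma socMatH_posDef_of_critical {m : ℕ} {Q : Matrix (Fin (m + 1)) (Fin m) ℝ}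
    {r : Fin (m + 1) → ℝ} {w : Fin m → ℝ} {v : ℝ} {u : Fin m → ℝ}
    (hF : (Qᵀ * Q - vecMulVec w w).PosDef)
    (hu : (Qᵀ * Q - vecMulVec w w) *ᵥ u + (Qᵀ *ᵥ r - v • w) = 0)
    (hval : (w ⬝ᵥ u + v) ^ 2 < (Q *ᵥ u + r) ⬝ᵥ (Q *ᵥ u + r)) :
    (socMatH Q r w v).PosDef := by
  rw [posDef_iff_dotProduct_mulVec]
  refine ⟨socMatH_isHermitian Q r w v hF.1, fun z hz => ?_⟩
  obtain ⟨a, d, rfl⟩ : ∃ a d, z = Sum.elim (fun _ : Fin 1 => a) (d + a • u) := by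
    refine ⟨z (Sum.inl 0), z ∘ Sum.inr - z (Sum.inl 0) • u, ?_⟩
    ext (i | i)
    · rw [Subsingleton.elim i 0, Sum.elim_inl]
    · simp
  have hcrit : (Q *ᵥ d) ⬝ᵥ (Q *ᵥ u) - (w ⬝ᵥ d) * (w ⬝ᵥ u)
      + ((Q *ᵥ d) ⬝ᵥ r - v * (w ⬝ᵥ d)) = 0 := by
    have h := congrArg (d ⬝ᵥ ·) hu
    simpa only [dotProduct_add, dotProduct_gram_sub_vecMulVec_mulVec_s7, dotProduct_sub,
      dotProduct_mulVec d Qᵀ, vecMul_transpose, dotProduct_smul, dotProduct_comm d w, smul_eq_mul,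
      dotProduct_zero] using h
  have hsplit : (Q *ᵥ (d + a • u) + a • r) ⬝ᵥ (Q *ᵥ (d + a • u) + a • r)
        - (w ⬝ᵥ (d + a • u) + a * v) ^ 2 =
      ((Q *ᵥ d) ⬝ᵥ (Q *ᵥ d) - (w ⬝ᵥ d) * (w ⬝ᵥ d))
        + a ^ 2 * ((Q *ᵥ u + r) ⬝ᵥ (Q *ᵥ u + r) - (w ⬝ᵥ u + v) ^ 2) := by
    simp only [mulVec_add, mulVec_smul, dotProduct_add, add_dotProduct, dotProduct_smul,
      smul_dotProduct, smul_eq_mul, dotProduct_comm r (Q *ᵥ _),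
      dotProduct_comm (Q *ᵥ u) (Q *ᵥ d)]
    linear_combination 2 * a * hcrit
  rw [star_trivial, dotProduct_socMatH_mulVec, hsplit, ← dotProduct_gram_sub_vecMulVec_mulVec_s7]
  have hgap := sub_pos.mpr hval
  by_cases hd : d = 0
  · have ha : a ≠ 0 := by
      rintro rfl
      apply hz
      ext (i | i) <;> simp [hd]
    rw [hd, zero_dotProduct, zero_add]
    positivity
  · have hdF := hF.dotProduct_mulVec_pos hd
    rw [star_trivial] at hdF
    positivity

/-- Sufficiency direction of Case 2 of Theorem 2, with explicit feasible
point: if `F = QᵀQ − wᵀw` is positive definite, `H` is not positive definite,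
and `w u₁ + v ≥ 0` where `u₁ = −F⁻¹(Qᵀr − wᵀv)`, then `u₁` satisfies the SOC
constraint `‖Q u₁ + r‖₂ ≤ w u₁ + v`. -/
theorem case2_sufficiency_explicit {m : ℕ} (hm : 0 < m)
    (Q : Matrix (Fin (m + 1)) (Fin m) ℝ) (r : Fin (m + 1) → ℝ)
    (w : Fin m → ℝ) (v : ℝ)
    (hF : (Qᵀ * Q - Matrix.vecMulVec w w).PosDef)
    (hH : ¬ (socMatH Q r w v).PosDef)
    (u₁ : Fin m → ℝ)
    (hu₁ : u₁ = -((Qᵀ * Q - Matrix.vecMulVec w w)⁻¹ *ᵥ (Qᵀ *ᵥ r - v • w)))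
    (hpos : w ⬝ᵥ u₁ + v ≥ 0) :
    eucNorm (Q *ᵥ u₁ + r) ≤ w ⬝ᵥ u₁ + v := by
  refine Real.sqrt_le_iff.mpr ⟨hpos, ?_⟩
  by_contra! hval
  refine hH (socMatH_posDef_of_critical hF ?_ hval)
  rw [hu₁, mulVec_neg, mulVec_mulVec, mul_nonsing_inv _ hF.det_pos.ne'.isUnit, one_mulVec,
    neg_add_cancel]
end
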